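/- For an almost hyperHermitian manifold (M, I, J, K, g) the following conditions are equivalent: (1) M is an HKT-manifold; (2) J dω_J = K dω_K and N_J = 0; (3) ∂_I(ω_J + iω_K) = 0 and N_J = 0; (4) ∂̄_I(ω_J − iω_K) = 0 and N_J = 0. -/

import Mathlib

/-!  Synthetic (Koszul-style) model of an almost quaternion-Hermitian `4n`-manifold.

`C` plays the role of the commutative ℝ-algebra of smooth functions and `V` that of
the `C`-module of vector fields, equipped with a directional derivative `D`, a Lie
bracket, a Riemannian metric `g` together with its Levi-Civita connection `nab`
(characterised by being torsion-free and metric), a local adapted basis `I, J, K`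
of anticommuting almost complex structures with `K = I J`, each compatible with the
metric, and a (local) orthonormal frame.  -/

noncomputable section

open scoped BigOperators

structure AQH (n : ℕ) (C : Type*) (V : Type*) [CommRing C] [Algebra ℝ C]
    [AddCommGroup V] [Module C V] where
  /-- derivative of a function along a vector field -/
  D : V → C → C
  D_add : ∀ X f g, D X (f + g) = D X f + D X g
  D_mul : ∀ X f g, D X (f * g) = f * D X g + g * D X f
  D_const : ∀ X (r : ℝ), D X (algebraMap ℝ C r) = 0
  D_addX : ∀ X Y f, D (X + Y) f = D X f + D Y f
  D_smulX : ∀ (f : C) (X : V) (h : C), D (f • X) h = f * D X h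
  /-- the Lie bracket of vector fields -/
  bracket : V → V → V
  bracket_skew : ∀ X Y, bracket X Y = -bracket Y X
  bracket_add : ∀ X Y Z, bracket X (Y + Z) = bracket X Y + bracket X Z
  bracket_smul : ∀ X (f : C) Y, bracket X (f • Y) = f • bracket X Y + (D X f) • Y
  bracket_jacobi : ∀ X Y Z,
    bracket X (bracket Y Z) + bracket Y (bracket Z X) + bracket Z (bracket X Y) = 0
  D_bracket : ∀ X Y f, D (bracket X Y) f = D X (D Y f) - D Y (D X f)
  /-- the Riemannian metric -/
  g : V → V → C
  g_symm : ∀ X Y, g X Y = g Y X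
  g_add : ∀ X Y Z, g (X + Y) Z = g X Z + g Y Z
  g_smul : ∀ (f : C) X Y, g (f • X) Y = f * g X Y
  /-- the Levi-Civita connection -/
  nab : V → V → V
  nab_addX : ∀ X Y Z, nab (X + Y) Z = nab X Z + nab Y Z
  nab_smulX : ∀ (f : C) X Y, nab (f • X) Y = f • nab X Y
  nab_add : ∀ X Y Z, nab X (Y + Z) = nab X Y + nab X Z
  nab_leibniz : ∀ X (f : C) Y, nab X (f • Y) = f • nab X Y + (D X f) • Y
  torsion_free : ∀ X Y, nab X Y - nab Y X = bracket X Y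
  nab_metric : ∀ X Y Z, D X (g Y Z) = g (nab X Y) Z + g Y (nab X Z)
  /-- the (local) adapted basis of almost complex structures -/
  I : V → V
  J : V → V
  K : V → V
  I_lin : ∀ (f : C) X Y, I (f • X + Y) = f • I X + I Y
  J_lin : ∀ (f : C) X Y, J (f • X + Y) = f • J X + J Y
  K_lin : ∀ (f : C) X Y, K (f • X + Y) = f • K X + K Y
  I_sq : ∀ X, I (I X) = -X
  J_sq : ∀ X, J (J X) = -X
  K_def : ∀ X, K X = I (J X)
  anticomm : ∀ X, I (J X) = -J (I X)
  I_metric : ∀ X Y, g (I X) (I Y) = g X Y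
  J_metric : ∀ X Y, g (J X) (J Y) = g X Y
  /-- a (local) orthonormal frame -/
  frame : Fin (4 * n) → V
  frame_orthonormal : ∀ i j, g (frame i) (frame j) = if i = j then 1 else 0
  frame_span : ∀ X, X = ∑ i, g X (frame i) • frame i

namespace AQH

section ops

variable {C V : Type*} [CommRing C]

/-- the operator `A_(1)` on covariant 3-tensors -/
def op1 (A : V → V) (ψ : V → V → V → C) : V → V → V → C := fun X Y Z => -ψ (A X) Y Z

/-- the operator `A_(2)` on covariant 3-tensors -/
def op2 (A : V → V) (ψ : V → V → V → C) : V → V → V → C := fun X Y Z => -ψ X (A Y) Z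

/-- the operator `A_(3)` on covariant 3-tensors -/
def op3 (A : V → V) (ψ : V → V → V → C) : V → V → V → C := fun X Y Z => -ψ X Y (A Z)

/-- the operator `A_(12) = A_(1) A_(2)` on covariant 3-tensors -/
def op12 (A : V → V) (ψ : V → V → V → C) : V → V → V → C := fun X Y Z => ψ (A X) (A Y) Z

/-- the operator `A_(13) = A_(1) A_(3)` on covariant 3-tensors -/
def op13 (A : V → V) (ψ : V → V → V → C) : V → V → V → C := fun X Y Z => ψ (A X) Y (A Z)

/-- the operator `A_(23) = A_(2) A_(3)` on covariant 3-tensors -/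
def op23 (A : V → V) (ψ : V → V → V → C) : V → V → V → C := fun X Y Z => ψ X (A Y) (A Z)

/-- the operator `𝓛_A = A_(12) + A_(13) + A_(23)` on three-forms -/
def calL (A : V → V) (ψ : V → V → V → C) : V → V → V → C :=
  fun X Y Z => op12 A ψ X Y Z + op13 A ψ X Y Z + op23 A ψ X Y Z

/-- the action `(A ν)(X) = -ν (A X)` of `A` on a one-form -/
def act1 (A : V → V) (ν : V → C) : V → C := fun X => -ν (A X)

/-- the action `(A ψ)(X,Y,Z) = -ψ(AX,AY,AZ)` of `A` on a three-form -/
def act3 (A : V → V) (ψ : V → V → V → C) : V → V → V → C :=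
  fun X Y Z => -ψ (A X) (A Y) (A Z)

/-- wedge product of two one-forms -/
def wedge11 (α β : V → C) : V → V → C := fun X Y => α X * β Y - α Y * β X

/-- wedge product of a one-form and a two-form -/
def wedge12 (ν : V → C) (ω : V → V → C) : V → V → V → C :=
  fun X Y Z => ν X * ω Y Z - ν Y * ω X Z + ν Z * ω X Y

/-- wedge product of two two-forms -/
def wedge22 (α β : V → V → C) : V → V → V → V → C := fun X Y Z W =>
  α X Y * β Z W - α X Z * β Y W + α X W * β Y Z
    + α Z W * β X Y - α Y W * β X Z + α Y Z * β X W

/-- a (0,3)-tensor is an alternating three-form -/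
def IsAlt3 (T : V → V → V → C) : Prop :=
  (∀ X Y Z, T Y X Z = -T X Y Z) ∧ (∀ X Y Z, T X Z Y = -T X Y Z)

variable [AddCommGroup V] [Module C V]

/-- `C`-linearity (tensoriality) of a three-form in its first argument -/
def Lin3 (T : V → V → V → C) : Prop :=
  ∀ (f : C) X X' Y Z, T (f • X + X') Y Z = f * T X Y Z + T X' Y Z

/-- `C`-linearity (tensoriality) of a one-form -/
def Lin1 (ν : V → C) : Prop := ∀ (f : C) X X', ν (f • X + X') = f * ν X + ν X'

end ops

section derived

variable {n : ℕ} {C V : Type*} [CommRing C] [Algebra ℝ C] [AddCommGroup V] [Module C V]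
  [Module ℝ V] [IsScalarTower ℝ C V]

variable (M : AQH n C V)

/-- the Kähler form `ω_A(X,Y) = g(X, A Y)` -/
def omega (A : V → V) : V → V → C := fun X Y => M.g X (A Y)

/-- `(∇_X A) Y` -/
def nabA (A : V → V) : V → V → V := fun X Y => M.nab X (A Y) - A (M.nab X Y)

/-- covariant derivative of a 2-form: `(∇_X ψ)(Y,Z)` -/
def nab2 (ψ : V → V → C) : V → V → V → C :=
  fun X Y Z => M.D X (ψ Y Z) - ψ (M.nab X Y) Z - ψ Y (M.nab X Z)

/-- covariant derivative of a 4-form -/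
def nab4 (ψ : V → V → V → V → C) : V → V → V → V → V → C :=
  fun X Y Z W U => M.D X (ψ Y Z W U) - ψ (M.nab X Y) Z W U - ψ Y (M.nab X Z) W U
    - ψ Y Z (M.nab X W) U - ψ Y Z W (M.nab X U)

/-- exterior derivative of a one-form -/
def d1 (ν : V → C) : V → V → C :=
  fun X Y => M.D X (ν Y) - M.D Y (ν X) - ν (M.bracket X Y)

/-- exterior derivative of a two-form -/
def d2 (ψ : V → V → C) : V → V → V → C :=
  fun X Y Z => M.D X (ψ Y Z) - M.D Y (ψ X Z) + M.D Z (ψ X Y)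
    - ψ (M.bracket X Y) Z + ψ (M.bracket X Z) Y - ψ (M.bracket Y Z) X

/-- exterior derivative of a four-form -/
def d4 (ψ : V → V → V → V → C) : V → V → V → V → V → C := fun X Y Z W U =>
  M.D X (ψ Y Z W U) - M.D Y (ψ X Z W U) + M.D Z (ψ X Y W U) - M.D W (ψ X Y Z U)
      + M.D U (ψ X Y Z W)
    - ψ (M.bracket X Y) Z W U + ψ (M.bracket X Z) Y W U - ψ (M.bracket X W) Y Z U
      + ψ (M.bracket X U) Y Z W
    - ψ (M.bracket Y Z) X W U + ψ (M.bracket Y W) X Z U - ψ (M.bracket Y U) X Z W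
    - ψ (M.bracket Z W) X Y U + ψ (M.bracket Z U) X Y W
    - ψ (M.bracket W U) X Y Z

/-- the Nijenhuis tensor `N_A(X,Y)` -/
def nijV (A : V → V) : V → V → V := fun X Y =>
  M.bracket X Y + A (M.bracket (A X) Y) + A (M.bracket X (A Y)) - M.bracket (A X) (A Y)

/-- the Nijenhuis `(0,3)`-tensor `N_A(X,Y,Z) = g(X, N_A(Y,Z))` -/
def nij3 (A : V → V) : V → V → V → C := fun X Y Z => M.g X (M.nijV A Y Z)

/-- the induced inner product of two 2-forms,
`⟨ψ,φ⟩ = (1/2!) ψ(e_i,e_j) φ(e_i,e_j)` -/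
def inner2 (ψ φ : V → V → C) : C :=
  (1/2 : ℝ) • ∑ i, ∑ j, ψ (M.frame i) (M.frame j) * φ (M.frame i) (M.frame j)

/-- the contraction `(Λ_A β)(X) = ⟨X ⌟ β, ω_A⟩` of a three-form -/
def Lam (A : V → V) (β : V → V → V → C) : V → C :=
  fun X => (1/2 : ℝ) •
    ∑ i, ∑ j, β X (M.frame i) (M.frame j) * M.omega A (M.frame i) (M.frame j)

/-- `λ_I(X) = (1/2n) ⟨∇_X ω_J, ω_K⟩` -/
def lambdaI : V → C := fun X =>
  (1/(2*(n:ℝ))) • M.inner2 (fun Y Z => M.nab2 (M.omega M.J) X Y Z) (M.omega M.K)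

/-- `λ_J(X) = (1/2n) ⟨∇_X ω_K, ω_I⟩` -/
def lambdaJ : V → C := fun X =>
  (1/(2*(n:ℝ))) • M.inner2 (fun Y Z => M.nab2 (M.omega M.K) X Y Z) (M.omega M.I)

/-- `λ_K(X) = (1/2n) ⟨∇_X ω_I, ω_J⟩` -/
def lambdaK : V → C := fun X =>
  (1/(2*(n:ℝ))) • M.inner2 (fun Y Z => M.nab2 (M.omega M.I) X Y Z) (M.omega M.J)

/-- codifferential of a two-form -/
def codiff2 (ψ : V → V → C) : V → C := fun Z => -∑ i, M.nab2 ψ (M.frame i) (M.frame i) Z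

/-- codifferential of a four-form -/
def codiff4 (ψ : V → V → V → V → C) : V → V → V → C :=
  fun X Y Z => -∑ i, M.nab4 ψ (M.frame i) (M.frame i) X Y Z

/-- `β_I = J dω_J + K dω_K` -/
def betaI : V → V → V → C := fun X Y Z =>
  act3 M.J (M.d2 (M.omega M.J)) X Y Z + act3 M.K (M.d2 (M.omega M.K)) X Y Z

/-- `β_J = K dω_K + I dω_I` -/
def betaJ : V → V → V → C := fun X Y Z =>
  act3 M.K (M.d2 (M.omega M.K)) X Y Z + act3 M.I (M.d2 (M.omega M.I)) X Y Z

/-- `β_K = I dω_I + J dω_J` -/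
def betaK : V → V → V → C := fun X Y Z =>
  act3 M.I (M.d2 (M.omega M.I)) X Y Z + act3 M.J (M.d2 (M.omega M.J)) X Y Z

/-- the intrinsic torsion
`ξ_X Y = -(1/4) Σ_A A (∇_X A) Y + (1/2) Σ_A λ_A(X) A Y` -/
def xi : V → V → V := fun X Y =>
  (-(1/4 : ℝ)) • (M.I (M.nabA M.I X Y) + M.J (M.nabA M.J X Y) + M.K (M.nabA M.K X Y))
    + (1/2 : ℝ) • (M.lambdaI X • M.I Y + M.lambdaJ X • M.J Y + M.lambdaK X • M.K Y)

/-- the one-form `ν^I_4 = I Λ_I β_I` -/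
def nu4I : V → C := act1 M.I (M.Lam M.I M.betaI)

/-- the one-form `ν^J_4 = J Λ_J β_J` -/
def nu4J : V → C := act1 M.J (M.Lam M.J M.betaJ)

/-- the one-form `ν^K_4 = K Λ_K β_K` -/
def nu4K : V → C := act1 M.K (M.Lam M.K M.betaK)

/-- `ν^I_3`, determined by `J Λ_J β_I = (1/(2n-1)) (ν^I_4 + (2n+1)(n-1) ν^I_3)` -/
def nu3I : V → C := fun X =>
  (1/((2*(n:ℝ)+1) * ((n:ℝ)-1))) •
    ((2*(n:ℝ)-1) • act1 M.J (M.Lam M.J M.betaI) X - M.nu4I X)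

/-- `ν^J_3`, determined by `K Λ_K β_J = (1/(2n-1)) (ν^J_4 + (2n+1)(n-1) ν^J_3)` -/
def nu3J : V → C := fun X =>
  (1/((2*(n:ℝ)+1) * ((n:ℝ)-1))) •
    ((2*(n:ℝ)-1) • act1 M.K (M.Lam M.K M.betaJ) X - M.nu4J X)

/-- `ν^K_3`, determined by `I Λ_I β_K = (1/(2n-1)) (ν^K_4 + (2n+1)(n-1) ν^K_3)` -/
def nu3K : V → C := fun X =>
  (1/((2*(n:ℝ)+1) * ((n:ℝ)-1))) •
    ((2*(n:ℝ)-1) • act1 M.I (M.Lam M.I M.betaK) X - M.nu4K X)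

/-- `β^{(E)}_{3I} = -(1/2) Jν^I_3 ∧ ω_J - (1/2) Kν^I_3 ∧ ω_K + (1/(2n-1)) Iν^I_3 ∧ ω_I` -/
def betaE3I : V → V → V → C := fun X Y Z =>
  (-(1/2:ℝ)) • wedge12 (act1 M.J M.nu3I) (M.omega M.J) X Y Z
    + (-(1/2:ℝ)) • wedge12 (act1 M.K M.nu3I) (M.omega M.K) X Y Z
    + (1/(2*(n:ℝ)-1)) • wedge12 (act1 M.I M.nu3I) (M.omega M.I) X Y Z

def betaE3J : V → V → V → C := fun X Y Z =>
  (-(1/2:ℝ)) • wedge12 (act1 M.K M.nu3J) (M.omega M.K) X Y Z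
    + (-(1/2:ℝ)) • wedge12 (act1 M.I M.nu3J) (M.omega M.I) X Y Z
    + (1/(2*(n:ℝ)-1)) • wedge12 (act1 M.J M.nu3J) (M.omega M.J) X Y Z

def betaE3K : V → V → V → C := fun X Y Z =>
  (-(1/2:ℝ)) • wedge12 (act1 M.I M.nu3K) (M.omega M.I) X Y Z
    + (-(1/2:ℝ)) • wedge12 (act1 M.J M.nu3K) (M.omega M.J) X Y Z
    + (1/(2*(n:ℝ)-1)) • wedge12 (act1 M.K M.nu3K) (M.omega M.K) X Y Z

/-- `β_{4I} = -(1/(2n-1)) Iν^I_4 ∧ ω_I` -/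
def beta4I : V → V → V → C := fun X Y Z =>
  (-(1/(2*(n:ℝ)-1))) • wedge12 (act1 M.I M.nu4I) (M.omega M.I) X Y Z

def beta4J : V → V → V → C := fun X Y Z =>
  (-(1/(2*(n:ℝ)-1))) • wedge12 (act1 M.J M.nu4J) (M.omega M.J) X Y Z

def beta4K : V → V → V → C := fun X Y Z =>
  (-(1/(2*(n:ℝ)-1))) • wedge12 (act1 M.K M.nu4K) (M.omega M.K) X Y Z

/-- `β_I^{(3+K)} = β_I - β^{(E)}_{3I} - β_{4I}` -/
def beta3KI : V → V → V → C := fun X Y Z => M.betaI X Y Z - M.betaE3I X Y Z - M.beta4I X Y Z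

def beta3KJ : V → V → V → C := fun X Y Z => M.betaJ X Y Z - M.betaE3J X Y Z - M.beta4J X Y Z

def beta3KK : V → V → V → C := fun X Y Z => M.betaK X Y Z - M.betaE3K X Y Z - M.beta4K X Y Z

/-- `β_I^{(3)} = (1/6) (2 - 𝓛_J - 𝓛_K) β_I^{(3+K)}` -/
def beta3I : V → V → V → C := fun X Y Z =>
  (1/6:ℝ) • ((2:ℝ) • M.beta3KI X Y Z - calL M.J M.beta3KI X Y Z - calL M.K M.beta3KI X Y Z)

def beta3J : V → V → V → C := fun X Y Z =>
  (1/6:ℝ) • ((2:ℝ) • M.beta3KJ X Y Z - calL M.K M.beta3KJ X Y Z - calL M.I M.beta3KJ X Y Z)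

def beta3K : V → V → V → C := fun X Y Z =>
  (1/6:ℝ) • ((2:ℝ) • M.beta3KK X Y Z - calL M.I M.beta3KK X Y Z - calL M.J M.beta3KK X Y Z)

/-- `β_I^{(K)} = (1/6) (4 + 𝓛_J + 𝓛_K) β_I^{(3+K)}` -/
def betaKI : V → V → V → C := fun X Y Z =>
  (1/6:ℝ) • ((4:ℝ) • M.beta3KI X Y Z + calL M.J M.beta3KI X Y Z + calL M.K M.beta3KI X Y Z)

def betaKJ : V → V → V → C := fun X Y Z =>
  (1/6:ℝ) • ((4:ℝ) • M.beta3KJ X Y Z + calL M.K M.beta3KJ X Y Z + calL M.I M.beta3KJ X Y Z)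

def betaKK : V → V → V → C := fun X Y Z =>
  (1/6:ℝ) • ((4:ℝ) • M.beta3KK X Y Z + calL M.I M.beta3KK X Y Z + calL M.J M.beta3KK X Y Z)

/-- the three-form `ψ^{(3)} = (1/12)(β_I^{(3)} + β_J^{(3)} + β_K^{(3)})` determining `ξ_{33}` -/
def psi3 : V → V → V → C := fun X Y Z =>
  (1/12:ℝ) • (M.beta3I X Y Z + M.beta3J X Y Z + M.beta3K X Y Z)

/-- the three-form `ψ^{(K)} = -(1/48)(β_I^{(K)} + β_J^{(K)} + β_K^{(K)})` determining `ξ_{KH}` -/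
def psiK : V → V → V → C := fun X Y Z =>
  (-(1/48:ℝ)) • (M.betaKI X Y Z + M.betaKJ X Y Z + M.betaKK X Y Z)

/-- the three-form `ψ^{(3)}_I` determining `ξ_{3H}` -/
def psi3I : V → V → V → C := fun X Y Z =>
  (-(1/8:ℝ)) • M.beta3I X Y Z
    + (1/48:ℝ) • ((3:ℝ) • (M.beta3I X Y Z + M.beta3J X Y Z + M.beta3K X Y Z)
        + calL M.I (fun a b c => M.beta3I a b c + M.beta3J a b c + M.beta3K a b c) X Y Z)

def psi3J : V → V → V → C := fun X Y Z =>
  (-(1/8:ℝ)) • M.beta3J X Y Z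
    + (1/48:ℝ) • ((3:ℝ) • (M.beta3I X Y Z + M.beta3J X Y Z + M.beta3K X Y Z)
        + calL M.J (fun a b c => M.beta3I a b c + M.beta3J a b c + M.beta3K a b c) X Y Z)

def psi3K : V → V → V → C := fun X Y Z =>
  (-(1/8:ℝ)) • M.beta3K X Y Z
    + (1/48:ℝ) • ((3:ℝ) • (M.beta3I X Y Z + M.beta3J X Y Z + M.beta3K X Y Z)
        + calL M.K (fun a b c => M.beta3I a b c + M.beta3J a b c + M.beta3K a b c) X Y Z)

/-- the three-form `ψ^{(K)}_I` determining `ξ_{K3}` -/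
def psiKI : V → V → V → C := fun X Y Z =>
  (-(1/2:ℝ)) • M.betaKI X Y Z
    + (1/6:ℝ) • (M.betaKI X Y Z + M.betaKJ X Y Z + M.betaKK X Y Z)

def psiKJ : V → V → V → C := fun X Y Z =>
  (-(1/2:ℝ)) • M.betaKJ X Y Z
    + (1/6:ℝ) • (M.betaKI X Y Z + M.betaKJ X Y Z + M.betaKK X Y Z)

def psiKK : V → V → V → C := fun X Y Z =>
  (-(1/2:ℝ)) • M.betaKK X Y Z
    + (1/6:ℝ) • (M.betaKI X Y Z + M.betaKJ X Y Z + M.betaKK X Y Z)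

/-- the one-form `θ^ξ` determining `ξ_{EH}`,
defined by `(6/n)(2n+1)(n-1) θ^ξ(X) = -⟨ξ_{e_i} e_i, X⟩` -/
def thetaXi : V → C := fun X =>
  (-((n:ℝ)/(6*(2*(n:ℝ)+1)*((n:ℝ)-1)))) • ∑ i, M.g (M.xi (M.frame i) (M.frame i)) X

/-- the local one-form `θ^ξ_I`, defined by `(2/n)(2n+1)(n-1) θ^ξ_I(X) = -⟨I ξ_{e_i} I e_i, X⟩` -/
def thetaXiI : V → C := fun X =>
  (-((n:ℝ)/(2*(2*(n:ℝ)+1)*((n:ℝ)-1)))) •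
    ∑ i, M.g (M.I (M.xi (M.frame i) (M.I (M.frame i)))) X

def thetaXiJ : V → C := fun X =>
  (-((n:ℝ)/(2*(2*(n:ℝ)+1)*((n:ℝ)-1)))) •
    ∑ i, M.g (M.J (M.xi (M.frame i) (M.J (M.frame i)))) X

def thetaXiK : V → C := fun X =>
  (-((n:ℝ)/(2*(2*(n:ℝ)+1)*((n:ℝ)-1)))) •
    ∑ i, M.g (M.K (M.xi (M.frame i) (M.K (M.frame i)))) X

/-- `α_I = -λ_I ⊗ g + (1/2)(J_(2) - J_(3)) ∇ω_K` -/
def alphaI : V → V → V → C := fun X Y Z =>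
  -(M.lambdaI X * M.g Y Z)
    + (1/2:ℝ) • (-(M.nab2 (M.omega M.K) X (M.J Y) Z) + M.nab2 (M.omega M.K) X Y (M.J Z))

def alphaJ : V → V → V → C := fun X Y Z =>
  -(M.lambdaJ X * M.g Y Z)
    + (1/2:ℝ) • (-(M.nab2 (M.omega M.I) X (M.K Y) Z) + M.nab2 (M.omega M.I) X Y (M.K Z))

def alphaK : V → V → V → C := fun X Y Z =>
  -(M.lambdaK X * M.g Y Z)
    + (1/2:ℝ) • (-(M.nab2 (M.omega M.J) X (M.I Y) Z) + M.nab2 (M.omega M.J) X Y (M.I Z))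

/-- the one-form `η_I(X) = α_I(e_i; e_i, X)` -/
def etaI : V → C := fun X => ∑ i, M.alphaI (M.frame i) (M.frame i) X

def etaJ : V → C := fun X => ∑ i, M.alphaJ (M.frame i) (M.frame i) X

def etaK : V → C := fun X => ∑ i, M.alphaK (M.frame i) (M.frame i) X

/-- the fundamental four-form `Ω = Σ_A ω_A ∧ ω_A` -/
def Omega4 : V → V → V → V → C := fun X Y Z W =>
  wedge22 (M.omega M.I) (M.omega M.I) X Y Z W
    + wedge22 (M.omega M.J) (M.omega M.J) X Y Z W
    + wedge22 (M.omega M.K) (M.omega M.K) X Y Z W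

/-- the one-form `θ^{d*Ω} = (1/3) Σ_A A Λ_A d*Ω` -/
def thetaDOmega : V → C := fun X =>
  (1/3:ℝ) • (act1 M.I (M.Lam M.I (M.codiff4 M.Omega4)) X
    + act1 M.J (M.Lam M.J (M.codiff4 M.Omega4)) X
    + act1 M.K (M.Lam M.K (M.codiff4 M.Omega4)) X)

/-- the vector-valued torsion: `g(W, T(X,Y)) = T(W,X,Y)` -/
def Tvec (T : V → V → V → C) : V → V → V := fun X Y => ∑ i, T (M.frame i) X Y • M.frame i

/-- the connection `∇ + (1/2) T` associated to a torsion (0,3)-tensor `T` -/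
def nabT (T : V → V → V → C) : V → V → V := fun X Y => M.nab X Y + (1/2:ℝ) • M.Tvec T X Y

/-- a connection is metric -/
def MetricConn (nab' : V → V → V) : Prop :=
  ∀ X Y Z, M.D X (M.g Y Z) = M.g (nab' X Y) Z + M.g Y (nab' X Z)

/-- a connection is quaternionic, with associated local one-forms `γ_I, γ_J, γ_K`:
`∇'_X I = γ_K(X) J - γ_J(X) K`, and cyclically -/
def QuatConn (nab' : V → V → V) (γI γJ γK : V → C) : Prop :=
  (∀ X Y, nab' X (M.I Y) - M.I (nab' X Y) = γK X • M.J Y - γJ X • M.K Y) ∧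
  (∀ X Y, nab' X (M.J Y) - M.J (nab' X Y) = γI X • M.K Y - γK X • M.I Y) ∧
  (∀ X Y, nab' X (M.K Y) - M.K (nab' X Y) = γJ X • M.I Y - γI X • M.J Y)

/-- the HKT condition: `I, J, K` integrable and there is a metric connection
`∇ + (1/2)T` with totally skew torsion making `I, J, K` parallel -/
def IsHKT : Prop :=
  (∀ X Y, M.nijV M.I X Y = 0) ∧ (∀ X Y, M.nijV M.J X Y = 0) ∧
  (∀ X Y, M.nijV M.K X Y = 0) ∧
  ∃ T : V → V → V → C, IsAlt3 T ∧ Lin3 T ∧ M.MetricConn (M.nabT T) ∧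
    (∀ X Y, M.nabT T X (M.I Y) = M.I (M.nabT T X Y)) ∧
    (∀ X Y, M.nabT T X (M.J Y) = M.J (M.nabT T X Y)) ∧
    (∀ X Y, M.nabT T X (M.K Y) = M.K (M.nabT T X Y))

/-- membership of a three-form in `KH`: type `{2,1}` for each `A` and `Λ_A ψ = 0` -/
def InKH3 (ψ : V → V → V → C) : Prop :=
  IsAlt3 ψ ∧ Lin3 ψ ∧
  calL M.I ψ = ψ ∧ calL M.J ψ = ψ ∧ calL M.K ψ = ψ ∧
  M.Lam M.I ψ = 0 ∧ M.Lam M.J ψ = 0 ∧ M.Lam M.K ψ = 0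

/-- the `(0,3)`-tensor of the `KH`-component of the torsion determined by `ψ^{(K)}`:
`3ψ - Σ_A A_(23) ψ` -/
def xiKH3 (ψ : V → V → V → C) : V → V → V → C := fun X Y Z =>
  (3:ℝ) • ψ X Y Z - (op23 M.I ψ X Y Z + op23 M.J ψ X Y Z + op23 M.K ψ X Y Z)

/-- the `(0,3)`-tensor of the `EH`-component of the torsion determined by the
one-form `θ`: `3 e_i ⊗ e_i ∧ θ - Σ_A (e_i ⊗ A e_i ∧ A θ + (2/n) A θ ⊗ ω_A)` -/
def xiEH3 (θ : V → C) : V → V → V → C := fun X Y Z =>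
  (3:ℝ) • ∑ i, M.g (M.frame i) X *
      (M.g (M.frame i) Y * θ Z - M.g (M.frame i) Z * θ Y)
  - ((∑ i, M.g (M.frame i) X *
        (M.g (M.I (M.frame i)) Y * act1 M.I θ Z - M.g (M.I (M.frame i)) Z * act1 M.I θ Y))
    + (∑ i, M.g (M.frame i) X *
        (M.g (M.J (M.frame i)) Y * act1 M.J θ Z - M.g (M.J (M.frame i)) Z * act1 M.J θ Y))
    + (∑ i, M.g (M.frame i) X *
        (M.g (M.K (M.frame i)) Y * act1 M.K θ Z - M.g (M.K (M.frame i)) Z * act1 M.K θ Y)))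
  - (2/(n:ℝ)) • (act1 M.I θ X * M.omega M.I Y Z + act1 M.J θ X * M.omega M.J Y Z
      + act1 M.K θ X * M.omega M.K Y Z)

/-- the intrinsic torsion lies in `(K+E)H`: it is the sum of a `KH`-tensor and an
`EH`-tensor as described in §3 of the paper -/
def inKEH : Prop :=
  ∃ (ψ : V → V → V → C) (θ : V → C), M.InKH3 ψ ∧ Lin1 θ ∧
    ∀ X Y Z, M.g Y (M.xi X Z) = M.xiKH3 ψ X Y Z + M.xiEH3 θ X Y Z

end derived

end AQH

namespace AQH

section complexforms

variable {n : ℕ} {C V : Type*} [CommRing C] [Algebra ℝ C] [AddCommGroup V] [Module C V]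
  [Module ℝ V] [IsScalarTower ℝ C V]

/-- Complex-valued functions, modelled as pairs (real part, imaginary part). -/
local notation "CC" => C × C

/-- multiplication by `i` on complexified functions -/
def muli (z : C × C) : C × C := (-z.2, z.1)

/-- the action of `A` on a complex-valued 2-form (`p = 2`, no sign) -/
def act2C (A : V → V) (ψ : V → V → C × C) : V → V → C × C := fun X Y => ψ (A X) (A Y)

/-- the action of `A` on a complex-valued 3-form (`p = 3`, sign `(-1)³`) -/
def act3C (A : V → V) (ψ : V → V → V → C × C) : V → V → V → C × C :=
  fun X Y Z => -ψ (A X) (A Y) (A Z)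

variable (M : AQH n C V)

/-- the exterior derivative of a complex-valued 2-form, componentwise -/
def d2C (ψ : V → V → C × C) : V → V → V → C × C := fun X Y Z =>
  (M.d2 (fun a b => (ψ a b).1) X Y Z, M.d2 (fun a b => (ψ a b).2) X Y Z)

/-- the operator `∂_A ψ = (1/2)(dψ + (-1)^p i A d (A ψ))` on complex 2-forms -/
def partialC (A : V → V) (ψ : V → V → C × C) : V → V → V → C × C := fun X Y Z =>
  (1/2:ℝ) • (M.d2C ψ X Y Z + muli (act3C A (M.d2C (act2C A ψ)) X Y Z))

/-- the operator `∂̄_A ψ = (1/2)(dψ - (-1)^p i A d (A ψ))` on complex 2-forms -/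
def partialBarC (A : V → V) (ψ : V → V → C × C) : V → V → V → C × C := fun X Y Z =>
  (1/2:ℝ) • (M.d2C ψ X Y Z - muli (act3C A (M.d2C (act2C A ψ)) X Y Z))

end complexforms

end AQH

namespace AQH

section proofs

set_option linter.all false

theorem cancelNat {C : Type*} [CommRing C] [Algebra ℝ C] (k : ℕ) (hk : k ≠ 0) {x : C}
    (h : (k : C) * x = 0) : x = 0 := by
  have h1 : algebraMap ℝ C ((k : ℝ)⁻¹) * (k : C) = 1 := by
    rw [← map_natCast (algebraMap ℝ C) k, ← map_mul,
      inv_mul_cancel₀ (Nat.cast_ne_zero.mpr hk), map_one]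
  calc x = algebraMap ℝ C ((k : ℝ)⁻¹) * ((k : C) * x) := by rw [← mul_assoc, h1, one_mul]
    _ = 0 := by rw [h, mul_zero]

section cert

variable {C V : Type*} [CommRing C] [Algebra ℝ C] [AddCommGroup V]

theorem cert1a (A : V → V) (a : V → V → V → C) (hA : ∀ X, A (A X) = -X)
    (Aneg : ∀ X, A (-X) = -A X)
    (neg1 : ∀ X Y Z, a (-X) Y Z = -a X Y Z) (neg2 : ∀ X Y Z, a X (-Y) Z = -a X Y Z)
    (neg3 : ∀ X Y Z, a X Y (-Z) = -a X Y Z)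
    (hskew : ∀ X Y Z, a X Y Z + a X Z Y = 0)
    (hN : ∀ W X Y, a Y (A W) X - a X (A W) Y - a (A X) W Y + a (A Y) W X = 0)
    (T : V → V → V → C)
    (hT : ∀ X Y Z, T X Y Z = a (A X) Y Z + a (A Y) Z X + a (A Z) X Y) (X Y Z : V) :
    2 * a X Y Z - T X Y (A Z) - T X (A Y) Z = 0 := by
  simp only [hT, hA, Aneg, neg1, neg2, neg3, neg_neg]
  have e0 := hskew X Y Z
  have e1 := hN (A Z) Y X
  have e2 := hskew (A X) Y (A Z)
  have e3 := hN (A Y) X Z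
  have e4 := hskew Z Y X
  have e5 := hskew (A Z) (A Y) X
  simp only [hA, Aneg, neg1, neg2, neg3, neg_neg] at e0 e1 e2 e3 e4 e5
  linear_combination (1) * e0 + (1) * e1 + (-1) * e2 + (1) * e3 + (1) * e4 + (-1) * e5

theorem cert1b (A : V → V) (a : V → V → V → C) (hA : ∀ X, A (A X) = -X)
    (Aneg : ∀ X, A (-X) = -A X)
    (neg1 : ∀ X Y Z, a (-X) Y Z = -a X Y Z) (neg2 : ∀ X Y Z, a X (-Y) Z = -a X Y Z)
    (neg3 : ∀ X Y Z, a X Y (-Z) = -a X Y Z)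
    (hskew : ∀ X Y Z, a X Y Z + a X Z Y = 0)
    (hanti : ∀ X Y Z, a X (A Y) (A Z) + a X Y Z = 0)
    (hN : ∀ W X Y, a Y (A W) X - a X (A W) Y - a (A X) W Y + a (A Y) W X = 0)
    (T : V → V → V → C)
    (hT : ∀ X Y Z, T X Y Z = a (A X) Y Z + a (A Y) Z X + a (A Z) X Y) (X Y Z : V) :
    T X Y Z - (T (A X) (A Y) Z + T (A X) Y (A Z) + T X (A Y) (A Z)) = 0 := by
  simp only [hT, hA, Aneg, neg1, neg2, neg3, neg_neg]
  have e0 := hskew X (A Z) Y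
  have e1 := hN Y X Z
  have e2 := hanti X Z (A Y)
  have e3 := hN Z (A X) (A Y)
  have e4 := hskew (A X) (A Y) (A Z)
  have e5 := hskew Y X (A Z)
  have e6 := hanti Y X (A Z)
  have e7 := hN X Z Y
  have e8 := hskew (A Y) X Z
  have e9 := hskew Z X (A Y)
  have e10 := hskew (A Z) (A Y) (A X)
  have e11 := hanti (A Z) (A Y) (A X)
  simp only [hA, Aneg, neg1, neg2, neg3, neg_neg] at e0 e1 e2 e3 e4 e5 e6 e7 e8 e9 e10 e11
  linear_combination (1) * e0 + (-1) * e1 + (1) * e2 + (-1) * e3 + (-1) * e4 + (1) * e5 + (-1) * e6 + (-1) * e7 + (1) * e8 + (1) * e9 + (-1) * e10 + (1) * e11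

theorem cert5 (A : V → V) (a T : V → V → V → C) (hA : ∀ X, A (A X) = -X)
    (Aneg : ∀ X, A (-X) = -A X)
    (neg1 : ∀ X Y Z, T (-X) Y Z = -T X Y Z) (neg2 : ∀ X Y Z, T X (-Y) Z = -T X Y Z)
    (neg3 : ∀ X Y Z, T X Y (-Z) = -T X Y Z)
    (t1 : ∀ X Y Z, T Y X Z + T X Y Z = 0) (t2 : ∀ X Y Z, T X Z Y + T X Y Z = 0)
    (h : ∀ X Y Z, 2 * a X Y Z - T X Y (A Z) - T X (A Y) Z = 0)
    (hN : ∀ W X Y, a Y (A W) X - a X (A W) Y - a (A X) W Y + a (A Y) W X = 0)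
    (X Y Z : V) :
    T X Y Z - (T (A X) (A Y) Z + T (A X) Y (A Z) + T X (A Y) (A Z)) = 0 := by
  apply cancelNat 2 two_ne_zero
  push_cast
  have e0 := t1 (A X) Y (A Z)
  have e1 := t2 (A X) Z (A Y)
  have e2 := t1 (A X) Z (A Y)
  have e3 := t2 Y (A Z) (A X)
  have e4 := t1 (A Z) Y (A X)
  have e5 := t2 Z (A X) (A Y)
  have e6 := t2 Y Z X
  have e7 := t1 Y X Z
  have e8 := t2 X (A Y) (A Z)
  have e9 := t1 (A Z) X (A Y)
  have e10 := t1 Z Y X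
  have e11 := h Z (A Y) X
  have e12 := t2 (A Z) X (A Y)
  have e13 := h (A Z) Y X
  have e14 := h (A X) Y Z
  have e15 := h X (A Y) Z
  have e16 := hN Y X Z
  simp only [hA, Aneg, neg1, neg2, neg3, neg_neg] at e0 e1 e2 e3 e4 e5 e6 e7 e8 e9 e10 e11 e12 e13 e14 e15 e16
  linear_combination (-1) * e0 + (-1) * e1 + (1) * e2 + (1) * e3 + (-1) * e4 + (-1) * e5 + (-1) * e6 + (1) * e7 + (-1) * e8 + (1) * e9 + (1) * e10 + (-1) * e11 + (-1) * e12 + (-1) * e13 + (1) * e14 + (1) * e15 + (2) * e16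

theorem cert6 (A : V → V) (a T : V → V → V → C) (hA : ∀ X, A (A X) = -X)
    (Aneg : ∀ X, A (-X) = -A X)
    (neg1 : ∀ X Y Z, T (-X) Y Z = -T X Y Z) (neg2 : ∀ X Y Z, T X (-Y) Z = -T X Y Z)
    (neg3 : ∀ X Y Z, T X Y (-Z) = -T X Y Z)
    (t1 : ∀ X Y Z, T Y X Z + T X Y Z = 0) (t2 : ∀ X Y Z, T X Z Y + T X Y Z = 0)
    (h : ∀ X Y Z, 2 * a X Y Z - T X Y (A Z) - T X (A Y) Z = 0)
    (hL : ∀ X Y Z, T X Y Z - (T (A X) (A Y) Z + T (A X) Y (A Z) + T X (A Y) (A Z)) = 0)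
    (X Y Z : V) :
    a Z (A X) Y - a Y (A X) Z - a (A Y) X Z + a (A Z) X Y = 0 := by
  apply cancelNat 2 two_ne_zero
  push_cast
  have e0 := h (A Y) X Z
  have e1 := hL Y X Z
  have e2 := h Y (A X) Z
  have e3 := hL Z X Y
  have e4 := h Z (A X) Y
  have e5 := h (A Z) X Y
  simp only [hA, Aneg, neg1, neg2, neg3, neg_neg] at e0 e1 e2 e3 e4 e5
  linear_combination (-1) * e0 + (1) * e1 + (-1) * e2 + (-1) * e3 + (1) * e4 + (1) * e5

end cert

variable {n : ℕ} {C V : Type*} [CommRing C] [Algebra ℝ C] [AddCommGroup V] [Module C V]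

variable (M : AQH n C V)

theorem g_zero_left (X : V) : M.g 0 X = 0 := by
  have := M.g_smul 0 0 X; simpa using this

theorem g_neg_left (X Y : V) : M.g (-X) Y = -M.g X Y := by
  have := M.g_smul (-1) X Y; simpa using this

theorem g_sub_left (X Y Z : V) : M.g (X - Y) Z = M.g X Z - M.g Y Z := by
  rw [sub_eq_add_neg, M.g_add, g_neg_left, sub_eq_add_neg]

theorem g_add_right (X Y Z : V) : M.g X (Y + Z) = M.g X Y + M.g X Z := by
  rw [M.g_symm, M.g_add, M.g_symm Y, M.g_symm Z]

theorem g_smul_right (f : C) (X Y : V) : M.g X (f • Y) = f * M.g X Y := by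
  rw [M.g_symm, M.g_smul, M.g_symm]

theorem g_neg_right (X Y : V) : M.g X (-Y) = -M.g X Y := by
  rw [M.g_symm, g_neg_left, M.g_symm]

theorem g_sub_right (X Y Z : V) : M.g X (Y - Z) = M.g X Y - M.g X Z := by
  rw [M.g_symm, g_sub_left, M.g_symm Y, M.g_symm Z]

theorem g_sum_right {ι : Type*} (s : Finset ι) (X : V) (F : ι → V) :
    M.g X (∑ i ∈ s, F i) = ∑ i ∈ s, M.g X (F i) := by
  classical
  induction s using Finset.induction_on with
  | empty => simp only [Finset.sum_empty]; rw [M.g_symm, g_zero_left]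
  | insert i s hi ih => rw [Finset.sum_insert hi, Finset.sum_insert hi, g_add_right, ih]

theorem eq_zero_of_g (X : V) (h : ∀ W, M.g W X = 0) : X = 0 := by
  rw [M.frame_span X]
  refine Finset.sum_eq_zero fun i _ => ?_
  rw [M.g_symm, h, zero_smul]

theorem D_zero (X : V) : M.D X 0 = 0 := by
  have := M.D_add X 0 0
  simpa using this

theorem D_neg (X : V) (f : C) : M.D X (-f) = -M.D X f := by
  have := M.D_add X (-f) f
  rw [neg_add_cancel, D_zero] at this
  linear_combination -this

theorem nab_neg (X Y : V) : M.nab X (-Y) = -M.nab X Y := by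
  have h := M.nab_add X (-Y) Y
  have h0 := M.nab_add X 0 0
  simp only [add_zero, left_eq_add] at h0
  rw [neg_add_cancel, h0] at h
  exact eq_neg_of_add_eq_zero_left h.symm

/-- a compatible almost complex structure -/
structure AC (A : V → V) : Prop where
  lin : ∀ (f : C) X Y, A (f • X + Y) = f • A X + A Y
  sq : ∀ X, A (A X) = -X
  met : ∀ X Y, M.g (A X) (A Y) = M.g X Y

variable {M}

theorem AC.map_add' {A : V → V} (h : M.AC A) (X Y : V) : A (X + Y) = A X + A Y := by
  have := h.lin 1 X Y; simpa using this

theorem AC.map_zero' {A : V → V} (h : M.AC A) : A 0 = 0 := by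
  have := h.map_add' 0 0; simpa using this

theorem AC.map_smul' {A : V → V} (h : M.AC A) (f : C) (X : V) : A (f • X) = f • A X := by
  have := h.lin f X 0; simpa [h.map_zero'] using this

theorem AC.map_neg' {A : V → V} (h : M.AC A) (X : V) : A (-X) = -A X := by
  have := h.map_smul' (-1) X; simpa using this

theorem AC.map_sub' {A : V → V} (h : M.AC A) (X Y : V) : A (X - Y) = A X - A Y := by
  rw [sub_eq_add_neg, h.map_add', h.map_neg', sub_eq_add_neg]

theorem AC.skew {A : V → V} (h : M.AC A) (X Y : V) : M.g (A X) Y = -M.g X (A Y) := by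
  have := h.met X (A Y)
  rw [h.sq, g_neg_right] at this
  rw [← this, neg_neg]

variable (M)

theorem acI : M.AC M.I := ⟨M.I_lin, M.I_sq, M.I_metric⟩

theorem acJ : M.AC M.J := ⟨M.J_lin, M.J_sq, M.J_metric⟩

theorem acK : M.AC M.K := by
  refine ⟨M.K_lin, fun X => ?_, fun X Y => ?_⟩
  · rw [M.K_def, M.K_def, M.anticomm X, M.acJ.map_neg', M.J_sq, neg_neg, M.I_sq]
  · rw [M.K_def, M.K_def, M.I_metric, M.J_metric]

/-- `g(Y, (P_X A) Z)` for a connection `P` -/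
def cov (P : V → V → V) (A : V → V) (X Y Z : V) : C := M.g Y (P X (A Z) - A (P X Z))

variable {M}

theorem cov_skew {A : V → V} (h : M.AC A) (P : V → V → V) (hP : M.MetricConn P) (X Y Z : V) :
    M.cov P A X Y Z + M.cov P A X Z Y = 0 := by
  have e1 := hP X Y (A Z)
  have e2 := hP X Z (A Y)
  have e3 : M.g Y (A Z) = -M.g Z (A Y) := by rw [M.g_symm, h.skew]
  rw [e3, D_neg] at e1
  have e4 := h.skew Y (P X Z)
  have e5 := h.skew Z (P X Y)
  have e6 := M.g_symm (P X Y) (A Z)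
  have e7 := M.g_symm (P X Z) (A Y)
  simp only [cov, g_sub_right]
  linear_combination -e1 - e2 - e6 - e7 - e4 - e5

theorem cov_anti {A : V → V} (h : M.AC A) (P : V → V → V) (hP : ∀ X Y, P X (-Y) = -P X Y)
    (X Y Z : V) : M.cov P A X (A Y) (A Z) + M.cov P A X Y Z = 0 := by
  have e := h.skew Y (P X Z)
  simp only [cov, g_sub_right, h.sq, hP, g_neg_right, h.met]
  linear_combination -e

theorem metric_nab : M.MetricConn M.nab := M.nab_metric

theorem d2_omega {A : V → V} (h : M.AC A) (X Y Z : V) :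
    M.d2 (M.omega A) X Y Z =
      M.cov M.nab A X Y Z + M.cov M.nab A Y Z X + M.cov M.nab A Z X Y := by
  have e3 : ∀ Y Z, M.g Y (A Z) = -M.g Z (A Y) := fun Y Z => by rw [M.g_symm, h.skew]
  simp only [d2, omega, cov, ← M.torsion_free, g_sub_left, g_sub_right]
  rw [e3 X Z, D_neg]
  simp only [M.nab_metric]
  have f2 := e3 X (M.nab Z Y)
  have f3 := e3 Y (M.nab X Z)
  have f6 := e3 Z (M.nab Y X)
  linear_combination f2 + f3 + f6

theorem nij_formula {A : V → V} (h : M.AC A) (W X Y : V) :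
    M.g W (M.nijV A X Y) = M.cov M.nab A Y (A W) X - M.cov M.nab A X (A W) Y
      - M.cov M.nab A (A X) W Y + M.cov M.nab A (A Y) W X := by
  simp only [nijV, cov, ← M.torsion_free, g_sub_right, g_add_right, h.map_sub', h.skew, h.sq,
    g_neg_right]
  ring

theorem cov_lin1 {A : V → V} (h : M.AC A) (f : C) (X X' Y Z : V) :
    M.cov M.nab A (f • X + X') Y Z = f * M.cov M.nab A X Y Z + M.cov M.nab A X' Y Z := by
  simp only [cov, M.nab_addX, M.nab_smulX, h.map_add', h.map_smul', g_sub_right, g_add_right,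
    g_smul_right]
  ring

theorem cov_lin2 {A : V → V} (f : C) (X Y Y' Z : V) :
    M.cov M.nab A X (f • Y + Y') Z = f * M.cov M.nab A X Y Z + M.cov M.nab A X Y' Z := by
  simp only [cov, M.g_add, M.g_smul]

theorem cov_lin3 {A : V → V} (h : M.AC A) (f : C) (X Y Z Z' : V) :
    M.cov M.nab A X Y (f • Z + Z') = f * M.cov M.nab A X Y Z + M.cov M.nab A X Y Z' := by
  have s := cov_skew h M.nab M.nab_metric X
  linear_combination s Y (f • Z + Z') - f * s Y Z - s Y Z' - cov_lin2 (M := M) (A := A) f X Z Z' Y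

theorem neg_of_lin {F : V → C} (hF : ∀ (f : C) X X', F (f • X + X') = f * F X + F X') (X : V) :
    F (-X) = -F X := by
  have h0 := hF 1 0 0
  have h1 := hF (-1) X 0
  simp only [smul_zero, add_zero, one_mul, left_eq_add] at h0
  simpa [h0] using h1

section withT

variable [Module ℝ V] [IsScalarTower ℝ C V]

theorem g_Tvec {T : V → V → V → C} (hl : Lin3 T) (W X Y : V) :
    M.g W (M.Tvec T X Y) = T W X Y := by
  have h0 : T 0 X Y = 0 := by
    have := hl 1 0 0 X Y
    simpa using this
  have key : ∀ s : Finset (Fin (4 * n)), T (∑ i ∈ s, M.g W (M.frame i) • M.frame i) X Y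
      = ∑ i ∈ s, M.g W (M.frame i) * T (M.frame i) X Y := by
    intro s
    induction s using Finset.induction_on with
    | empty => simpa using h0
    | insert i s hi ih => rw [Finset.sum_insert hi, Finset.sum_insert hi, hl, ih]
  conv_rhs => rw [M.frame_span W, key]
  rw [Tvec, g_sum_right]
  refine Finset.sum_congr rfl fun i _ => ?_
  rw [g_smul_right, mul_comm]

theorem g_nabT {T : V → V → V → C} (hl : Lin3 T) (W X Y : V) :
    2 * M.g W (M.nabT T X Y) = 2 * M.g W (M.nab X Y) + T W X Y := by
  have h2 : (2 : C) * algebraMap ℝ C (1/2) = 1 := by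
    have : (2 : C) = algebraMap ℝ C 2 := (map_ofNat (algebraMap ℝ C) 2).symm
    rw [this, ← map_mul]; norm_num
  rw [nabT, g_add_right, ← algebraMap_smul C (1/2 : ℝ), g_smul_right, g_Tvec hl]
  linear_combination (T W X Y) * h2

theorem eq_of_two {x y : C} (h : 2 * x = 2 * y) : x = y := by
  have := cancelNat 2 two_ne_zero (x := x - y) (by push_cast; linear_combination h)
  linear_combination this

theorem cov_nabT {T : V → V → V → C} (ht : IsAlt3 T) (hl : Lin3 T) {A : V → V} (h : M.AC A)
    (X Y Z : V) :
    2 * M.cov (M.nabT T) A X Y Z = 2 * M.cov M.nab A X Y Z - T X Y (A Z) - T X (A Y) Z := by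
  have e1 := g_nabT (M := M) hl Y X (A Z)
  have e2 := g_nabT (M := M) hl (A Y) X Z
  have e3 := h.skew Y (M.nabT T X Z)
  have e4 := h.skew Y (M.nab X Z)
  have e5 := ht.1 X Y (A Z)
  have e6 := ht.1 X (A Y) Z
  simp only [cov, g_sub_right]
  linear_combination e1 + e2 - 2 * e3 + 2 * e4 + e5 + e6

theorem metric_nabT {T : V → V → V → C} (ht : IsAlt3 T) (hl : Lin3 T) :
    M.MetricConn (M.nabT T) := by
  intro X Y Z
  apply eq_of_two
  have e1 := g_nabT (M := M) hl Z X Y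
  have e2 := g_nabT (M := M) hl Y X Z
  have e3 := M.nab_metric X Y Z
  have e4 := ht.1 X Y Z
  have e5 := ht.1 X Z Y
  have e6 := ht.2 X Y Z
  rw [M.g_symm (M.nab X Y) Z] at e3
  rw [M.g_symm (M.nabT T X Y) Z]
  linear_combination 2 * e3 - e1 - e2 - e4 - e5 + e6

theorem T_neg1 {T : V → V → V → C} (hl : Lin3 T) (X Y Z : V) :
    T (-X) Y Z = -T X Y Z :=
  neg_of_lin (F := fun X => T X Y Z) (fun f X X' => hl f X X' Y Z) X

theorem T_neg2 {T : V → V → V → C} (ht : IsAlt3 T) (hl : Lin3 T) (X Y Z : V) :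
    T X (-Y) Z = -T X Y Z := by
  rw [ht.1, T_neg1 hl, ht.1 X Y Z, neg_neg]

theorem T_neg3 {T : V → V → V → C} (ht : IsAlt3 T) (hl : Lin3 T) (X Y Z : V) :
    T X Y (-Z) = -T X Y Z := by
  rw [ht.2, T_neg2 ht hl, ht.2 X Y Z, neg_neg]

theorem nabT_neg {T : V → V → V → C} (ht : IsAlt3 T) (hl : Lin3 T) (X Y : V) :
    M.nabT T X (-Y) = -M.nabT T X Y := by
  have : M.nabT T X (-Y) + M.nabT T X Y = 0 := by
    apply M.eq_zero_of_g
    intro W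
    apply eq_of_two
    have e1 := g_nabT (M := M) hl W X Y
    have e2 := g_nabT (M := M) hl W X (-Y)
    rw [T_neg3 ht hl, nab_neg, g_neg_right] at e2
    rw [g_add_right]
    linear_combination e1 + e2
  exact eq_neg_of_add_eq_zero_left this

theorem parallel_iff {P : V → V → V} {A : V → V} :
    (∀ X Y, P X (A Y) = A (P X Y)) ↔ ∀ X Y Z, M.cov P A X Y Z = 0 := by
  constructor
  · intro h X Y Z
    rw [cov, h, sub_self, M.g_symm, g_zero_left]
  · intro h X Z
    exact sub_eq_zero.mp (M.eq_zero_of_g _ fun W => h X W Z)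

theorem parallel_iff' {T : V → V → V → C} (ht : IsAlt3 T) (hl : Lin3 T) {A : V → V}
    (h : M.AC A) :
    (∀ X Y, M.nabT T X (A Y) = A (M.nabT T X Y)) ↔
      ∀ X Y Z, 2 * M.cov M.nab A X Y Z - T X Y (A Z) - T X (A Y) Z = 0 := by
  rw [parallel_iff (M := M)]
  refine forall_congr' fun X => forall_congr' fun Y => forall_congr' fun Z => ?_
  rw [← cov_nabT ht hl h]
  constructor
  · intro h; rw [h, mul_zero]
  · intro h; exact eq_of_two (by rw [h, mul_zero])

theorem nij_iff {A : V → V} (h : M.AC A) :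
    (∀ X Y, M.nijV A X Y = 0) ↔ ∀ W X Y, M.cov M.nab A Y (A W) X - M.cov M.nab A X (A W) Y
      - M.cov M.nab A (A X) W Y + M.cov M.nab A (A Y) W X = 0 := by
  constructor
  · intro hN W X Y
    rw [← nij_formula h, hN, M.g_symm, g_zero_left]
  · intro hN X Y
    exact M.eq_zero_of_g _ fun W => by rw [nij_formula h, hN]

/-- an integrable structure parallel for `∇ + T/2` determines `T` -/
theorem torsion_eq {T : V → V → V → C} (ht : IsAlt3 T) (hl : Lin3 T) {A : V → V}
    (h : M.AC A) (hN : ∀ X Y, M.nijV A X Y = 0)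
    (hp : ∀ X Y, M.nabT T X (A Y) = A (M.nabT T X Y)) :
    act3 A (M.d2 (M.omega A)) = T := by
  rw [parallel_iff' ht hl h] at hp
  rw [nij_iff h] at hN
  have t1 : ∀ X Y Z, T Y X Z + T X Y Z = 0 := fun X Y Z => by rw [ht.1]; ring
  have t2 : ∀ X Y Z, T X Z Y + T X Y Z = 0 := fun X Y Z => by rw [ht.2]; ring
  have hL := cert5 A (M.cov M.nab A) T h.sq h.map_neg' (T_neg1 hl) (T_neg2 ht hl)
    (T_neg3 ht hl) t1 t2 hp hN
  funext X Y Z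
  apply eq_of_two
  have e1 := hp (A X) (A Y) (A Z)
  have e2 := hp (A Y) (A Z) (A X)
  have e3 := hp (A Z) (A X) (A Y)
  simp only [h.sq, T_neg2 ht hl, T_neg3 ht hl] at e1 e2 e3
  have e4 := hL X Y Z
  rw [act3, d2_omega h]
  have hc : ∀ X Y Z, T Y Z X = T X Y Z := fun X Y Z => by
    rw [ht.2, ht.1, neg_neg]
  have f1 := hc X (A Y) (A Z)
  have f2 := hc (A X) (A Y) Z
  have f3 := hc (A Z) (A X) Y
  have f4 := hc (A X) Y (A Z)
  have f5 := hc (A Z) X (A Y)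
  have f6 := hc X (A Y) (A Z)
  linear_combination -e1 - e2 - e3 - 2 * e4 + f1 + f2 - f3 - f5

/-- the Bismut connection of an integrable structure -/
theorem bismut {T : V → V → V → C} {A : V → V} (h : M.AC A)
    (hN : ∀ X Y, M.nijV A X Y = 0) (hT : T = act3 A (M.d2 (M.omega A))) :
    IsAlt3 T ∧ Lin3 T ∧ (∀ X Y Z, 2 * M.cov M.nab A X Y Z - T X Y (A Z) - T X (A Y) Z = 0) ∧
    (∀ X Y Z, T X Y Z - (T (A X) (A Y) Z + T (A X) Y (A Z) + T X (A Y) (A Z)) = 0) := by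
  rw [nij_iff h] at hN
  have hs := cov_skew h M.nab M.nab_metric
  have ha := cov_anti h M.nab M.nab_neg
  have hT' : ∀ X Y Z, T X Y Z = M.cov M.nab A (A X) Y Z + M.cov M.nab A (A Y) Z X
      + M.cov M.nab A (A Z) X Y := by
    intro X Y Z
    rw [hT, act3, d2_omega h]
    linear_combination -ha (A X) Y Z - ha (A Y) Z X - ha (A Z) X Y
  have n1 : ∀ X Y Z, M.cov M.nab A (-X) Y Z = -M.cov M.nab A X Y Z := fun X Y Z =>
    neg_of_lin (F := fun X => M.cov M.nab A X Y Z) (fun f X X' => cov_lin1 h f X X' Y Z) X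
  have n2 : ∀ X Y Z, M.cov M.nab A X (-Y) Z = -M.cov M.nab A X Y Z := fun X Y Z =>
    neg_of_lin (F := fun Y => M.cov M.nab A X Y Z) (fun f Y Y' => cov_lin2 f X Y Y' Z) Y
  have n3 : ∀ X Y Z, M.cov M.nab A X Y (-Z) = -M.cov M.nab A X Y Z := fun X Y Z =>
    neg_of_lin (F := fun Z => M.cov M.nab A X Y Z) (fun f Z Z' => cov_lin3 h f X Y Z Z') Z
  refine ⟨⟨fun X Y Z => ?_, fun X Y Z => ?_⟩, fun f X X' Y Z => ?_,
    cert1a A _ h.sq h.map_neg' n1 n2 n3 hs hN T hT',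
    cert1b A _ h.sq h.map_neg' n1 n2 n3 hs ha hN T hT'⟩
  · rw [hT', hT']
    linear_combination hs (A X) Y Z + hs (A Y) X Z + hs (A Z) X Y
  · rw [hT', hT']
    linear_combination hs (A X) Y Z + hs (A Y) X Z + hs (A Z) X Y
  · simp only [hT', h.lin, cov_lin1 h, cov_lin2, cov_lin3 h]
    ring

theorem quat (X : V) : (M.I (M.J X) = M.K X ∧ M.J (M.I X) = -M.K X) ∧
    (M.J (M.K X) = M.I X ∧ M.K (M.J X) = -M.I X) ∧
    (M.K (M.I X) = M.J X ∧ M.I (M.K X) = -M.J X) := by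
  have h1 : M.J (M.I X) = -M.K X := by rw [M.K_def, M.anticomm, neg_neg]
  refine ⟨⟨(M.K_def X).symm, h1⟩, ⟨?_, ?_⟩, ?_, ?_⟩
  · have := M.anticomm (M.J X)
    rw [← M.K_def X, M.J_sq, M.acI.map_neg'] at this
    exact (neg_injective this).symm
  · rw [M.K_def, M.J_sq, M.acI.map_neg']
  · rw [M.K_def, h1, M.K_def, M.acI.map_neg', M.I_sq, neg_neg]
  · rw [M.K_def, M.I_sq]

theorem cert7 (T b : V → V → V → C)
    (neg1 : ∀ X Y Z, T (-X) Y Z = -T X Y Z) (neg2 : ∀ X Y Z, T X (-Y) Z = -T X Y Z)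
    (neg3 : ∀ X Y Z, T X Y (-Z) = -T X Y Z)
    (bneg1 : ∀ X Y Z, b (-X) Y Z = -b X Y Z) (bneg2 : ∀ X Y Z, b X (-Y) Z = -b X Y Z)
    (bneg3 : ∀ X Y Z, b X Y (-Z) = -b X Y Z)
    (t1 : ∀ X Y Z, T Y X Z + T X Y Z = 0) (t2 : ∀ X Y Z, T X Z Y + T X Y Z = 0)
    (bskew : ∀ X Y Z, b X Y Z + b X Z Y = 0)
    (bJ : ∀ X Y Z, b X (M.J Y) (M.J Z) + b X Y Z = 0)
    (bK : ∀ X Y Z, b X (M.K Y) (M.K Z) + b X Y Z = 0)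
    (bc : ∀ X Y Z, b X Y Z + b Y Z X + b Z X Y - T (M.K X) (M.K Y) (M.K Z) + T X Y (M.K Z)
      + T X (M.K Y) Z + T (M.K X) Y Z = 0) (X Y Z : V) : b X Y Z = 0 := by
  have q1 := M.I_sq
  have q2 := M.J_sq
  have q3 := M.acK.sq
  have q4 := fun X => (quat (M := M) X).1.1
  have q5 := fun X => (quat (M := M) X).1.2
  have q6 := fun X => (quat (M := M) X).2.1.1
  have q7 := fun X => (quat (M := M) X).2.1.2
  have q8 := fun X => (quat (M := M) X).2.2.1
  have q9 := fun X => (quat (M := M) X).2.2.2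
  have i_neg := M.acI.map_neg'
  have j_neg := M.acJ.map_neg'
  have k_neg := M.acK.map_neg'
  apply cancelNat 4 four_ne_zero
  push_cast
  have e0 := bskew X Z Y
  have e1 := bK X Z Y
  have e2 := bc (M.K X) Z (M.K Y)
  have e3 := bc X (M.K Z) (M.K Y)
  have e4 := bJ X Y Z
  have e5 := bK X (M.I Y) (M.I Z)
  have e6 := bc (M.I Y) (M.J Z) (M.K X)
  have e7 := bc (M.I Y) (M.I Z) X
  have e8 := bJ (M.K X) (M.K Y) Z
  have e9 := bskew (M.K X) Z (M.K Y)
  have e10 := bJ (M.I Y) (M.I Z) X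
  have e11 := bJ (M.I Y) Z (M.I X)
  have e12 := bK (M.I Y) Z (M.I X)
  have e13 := bK (M.K Y) X (M.K Z)
  have e14 := bc (M.K X) (M.J Y) (M.I Z)
  have e15 := bc X (M.J Y) (M.J Z)
  have e16 := bc Y Z X
  have e17 := bc Y (M.K Z) (M.K X)
  have e18 := bJ (M.K X) Y (M.K Z)
  have e19 := bK Y Z X
  have e20 := bK (M.J Y) (M.J Z) X
  have e21 := bskew Z X Y
  have e22 := bK Z Y X
  have e23 := bK (M.I Z) X (M.I Y)
  have e24 := bK (M.J Z) X (M.J Y)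
  have e25 := bskew (M.K Z) (M.K Y) X
  have e26 := bK (M.K Z) X (M.K Y)
  simp only [q1, q2, q3, q4, q5, q6, q7, q8, q9, i_neg, j_neg, k_neg, neg1, neg2, neg3, bneg1, bneg2, bneg3, neg_neg] at e0 e1 e2 e3 e4 e5 e6 e7 e8 e9 e10 e11 e12 e13 e14 e15 e16 e17 e18 e19 e20 e21 e22 e23 e24 e25 e26
  linear_combination (1) * e0 + (-1) * e1 + (-1) * e2 + (1) * e3 + (2) * e4 + (-1) * e5 + (1) * e6 + (1) * e7 + (-1) * e8 + (1) * e9 + (-1) * e10 + (1) * e11 + (-1) * e12 + (-1) * e13 + (1) * e14 + (-1) * e15 + (1) * e16 + (1) * e17 + (-1) * e18 + (-1) * e19 + (1) * e20 + (-1) * e21 + (1) * e22 + (-1) * e23 + (1) * e24 + (-1) * e25 + (1) * e26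

theorem cert9 (T : V → V → V → C)
    (neg1 : ∀ X Y Z, T (-X) Y Z = -T X Y Z) (neg2 : ∀ X Y Z, T X (-Y) Z = -T X Y Z)
    (neg3 : ∀ X Y Z, T X Y (-Z) = -T X Y Z)
    (hLJ : ∀ X Y Z, T X Y Z - (T (M.J X) (M.J Y) Z + T (M.J X) Y (M.J Z)
      + T X (M.J Y) (M.J Z)) = 0)
    (hLK : ∀ X Y Z, T X Y Z - (T (M.K X) (M.K Y) Z + T (M.K X) Y (M.K Z)
      + T X (M.K Y) (M.K Z)) = 0) (X Y Z : V) :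
    T X Y Z - (T (M.I X) (M.I Y) Z + T (M.I X) Y (M.I Z) + T X (M.I Y) (M.I Z)) = 0 := by
  have q1 := M.I_sq
  have q2 := M.J_sq
  have q3 := M.acK.sq
  have q4 := fun X => (quat (M := M) X).1.1
  have q5 := fun X => (quat (M := M) X).1.2
  have q6 := fun X => (quat (M := M) X).2.1.1
  have q7 := fun X => (quat (M := M) X).2.1.2
  have q8 := fun X => (quat (M := M) X).2.2.1
  have q9 := fun X => (quat (M := M) X).2.2.2
  have i_neg := M.acI.map_neg'
  have j_neg := M.acJ.map_neg'
  have k_neg := M.acK.map_neg'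
  have bneg1 := neg1
  have bneg2 := neg2
  have bneg3 := neg3
  apply cancelNat 2 two_ne_zero
  push_cast
  have e0 := hLK X Y Z
  have e1 := hLJ X (M.K Y) (M.K Z)
  have e2 := hLK (M.I X) (M.I Y) Z
  have e3 := hLJ (M.K X) Y (M.K Z)
  have e4 := hLK X (M.I Y) (M.I Z)
  have e5 := hLJ X Y Z
  have e6 := hLJ (M.I X) (M.I Y) Z
  have e7 := hLK (M.J X) Y (M.J Z)
  simp only [q1, q2, q3, q4, q5, q6, q7, q8, q9, i_neg, j_neg, k_neg, neg1, neg2, neg3, bneg1, bneg2, bneg3, neg_neg] at e0 e1 e2 e3 e4 e5 e6 e7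
  linear_combination (1) * e0 + (1) * e1 + (-1) * e2 + (1) * e3 + (-1) * e4 + (1) * e5 + (-1) * e6 + (1) * e7

theorem hkt_of {T : V → V → V → C} (hTJ : T = act3 M.J (M.d2 (M.omega M.J)))
    (hTK : T = act3 M.K (M.d2 (M.omega M.K))) (hN : ∀ X Y, M.nijV M.J X Y = 0) : M.IsHKT := by
  obtain ⟨ht, hl, hpJ, hLJ⟩ := bismut M.acJ hN hTJ
  have t1 : ∀ X Y Z, T Y X Z + T X Y Z = 0 := fun X Y Z => by rw [ht.1]; ring
  have t2 : ∀ X Y Z, T X Z Y + T X Y Z = 0 := fun X Y Z => by rw [ht.2]; ring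
  have hc : ∀ X Y Z, T Y Z X = T X Y Z := fun X Y Z => by
    rw [ht.2, ht.1, neg_neg]
  have n1 := T_neg1 hl
  have n2 := T_neg2 ht hl
  have n3 := T_neg3 ht hl
  have hK := M.acK
  have pJ := (parallel_iff' (M := M) ht hl M.acJ).mpr hpJ
  have pneg := nabT_neg (M := M) ht hl
  have bdef := cov_nabT (M := M) ht hl hK
  have hdK : ∀ X Y Z, M.d2 (M.omega M.K) X Y Z = T (M.K X) (M.K Y) (M.K Z) := by
    intro X Y Z
    have a1 : ∀ X Y Z, M.cov M.nab M.K (-X) Y Z = -M.cov M.nab M.K X Y Z := fun X Y Z =>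
      neg_of_lin (F := fun X => M.cov M.nab M.K X Y Z) (fun f X X' => cov_lin1 hK f X X' Y Z) X
    have a2 : ∀ X Y Z, M.cov M.nab M.K X (-Y) Z = -M.cov M.nab M.K X Y Z := fun X Y Z =>
      neg_of_lin (F := fun Y => M.cov M.nab M.K X Y Z) (fun f Y Y' => cov_lin2 f X Y Y' Z) Y
    have a3 : ∀ X Y Z, M.cov M.nab M.K X Y (-Z) = -M.cov M.nab M.K X Y Z := fun X Y Z =>
      neg_of_lin (F := fun Z => M.cov M.nab M.K X Y Z) (fun f Z Z' => cov_lin3 hK f X Y Z Z') Z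
    rw [hTK, act3, d2_omega hK, d2_omega hK]
    simp only [hK.sq, a1, a2, a3]
    ring
  have bc : ∀ X Y Z, M.cov (M.nabT T) M.K X Y Z + M.cov (M.nabT T) M.K Y Z X
      + M.cov (M.nabT T) M.K Z X Y - T (M.K X) (M.K Y) (M.K Z) + T X Y (M.K Z)
      + T X (M.K Y) Z + T (M.K X) Y Z = 0 := by
    intro X Y Z
    apply cancelNat 2 two_ne_zero
    push_cast
    have e0 := hdK X Y Z
    rw [d2_omega hK] at e0
    have e1 := bdef X Y Z
    have e2 := bdef Y Z X
    have e3 := bdef Z X Y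
    have f1 := hc (M.K X) Y Z
    have f2 := hc X (M.K Y) Z
    have f3 := hc X Y (M.K Z)
    have f4 := hc Z X (M.K Y)
    have f5 := hc Z (M.K X) Y
    have f6 := hc (M.K Z) X Y
    linear_combination 2 * e0 + e1 + e2 + e3 - f1 - f3 + f4 + f5
  have bskew := cov_skew hK (M.nabT T) (metric_nabT ht hl)
  have bK := cov_anti hK (M.nabT T) pneg
  have bJ : ∀ X Y Z, M.cov (M.nabT T) M.K X (M.J Y) (M.J Z) + M.cov (M.nabT T) M.K X Y Z = 0 := by
    intro X Y Z
    have q6 := fun X => (quat (M := M) X).2.1.1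
    have q7 := fun X => (quat (M := M) X).2.1.2
    have e : ∀ Z, M.K (M.J Z) = -M.J (M.K Z) := fun Z => by rw [q6, q7]
    simp only [cov, e, pneg, pJ, g_sub_right, g_neg_right, M.J_metric]
    ring
  have bneg2 : ∀ X Y Z, M.cov (M.nabT T) M.K X (-Y) Z = -M.cov (M.nabT T) M.K X Y Z := by
    intro X Y Z
    rw [cov, g_neg_left, cov]
  have bneg3 : ∀ X Y Z, M.cov (M.nabT T) M.K X Y (-Z) = -M.cov (M.nabT T) M.K X Y Z := by
    intro X Y Z
    linear_combination bskew X Y (-Z) + bskew X Y Z - bneg2 X Z Y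
  have bneg1 : ∀ X Y Z, M.cov (M.nabT T) M.K (-X) Y Z = -M.cov (M.nabT T) M.K X Y Z := by
    intro X Y Z
    have a1 := neg_of_lin (F := fun X => M.cov M.nab M.K X Y Z)
      (fun f X X' => cov_lin1 hK f X X' Y Z) X
    apply eq_of_two
    have e1 := bdef X Y Z
    have e2 := bdef (-X) Y Z
    rw [n1, n1] at e2
    linear_combination e1 + e2 + 2 * a1
  have b0 := cert7 (M := M) T (M.cov (M.nabT T) M.K) n1 n2 n3 bneg1 bneg2 bneg3 t1 t2 bskew bJ
    bK bc
  have pK := (parallel_iff (M := M)).mpr b0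
  have hLK : ∀ X Y Z, T X Y Z - (T (M.K X) (M.K Y) Z + T (M.K X) Y (M.K Z)
      + T X (M.K Y) (M.K Z)) = 0 := by
    intro X Y Z
    have := bc (M.K X) (M.K Y) (M.K Z)
    simp only [b0, hK.sq, n1, n2, n3] at this
    linear_combination this
  have hLI := cert9 (M := M) T n1 n2 n3 hLJ hLK
  have pI : ∀ X Y, M.nabT T X (M.I Y) = M.I (M.nabT T X Y) := by
    intro X Y
    have q6 := fun X => (quat (M := M) X).2.1.1
    rw [← q6, pJ, pK, q6]
  have hpK := (parallel_iff' (M := M) ht hl hK).mp pK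
  have hpI := (parallel_iff' (M := M) ht hl M.acI).mp pI
  refine ⟨?_, hN, ?_, T, ht, hl, metric_nabT ht hl, pI, pJ, pK⟩
  · rw [nij_iff M.acI]
    exact cert6 M.I _ T M.acI.sq M.acI.map_neg' n1 n2 n3 t1 t2 hpI hLI
  · rw [nij_iff hK]
    exact cert6 M.K _ T hK.sq hK.map_neg' n1 n2 n3 t1 t2 hpK hLK

variable (M)

theorem hkt_iff : M.IsHKT ↔
    (act3 M.J (M.d2 (M.omega M.J)) = act3 M.K (M.d2 (M.omega M.K)) ∧
       ∀ X Y, M.nijV M.J X Y = 0) := by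
  constructor
  · rintro ⟨_, hNJ, hNK, T, ht, hl, _, _, pJ, pK⟩
    exact ⟨(torsion_eq ht hl M.acJ hNJ pJ).trans (torsion_eq ht hl M.acK hNK pK).symm, hNJ⟩
  · rintro ⟨h, hN⟩
    exact hkt_of rfl h hN

theorem half_smul_eq_zero (z : C × C) : (1/2 : ℝ) • z = 0 ↔ z = 0 := by
  constructor
  · intro h
    have : (2 : ℝ) • ((1/2 : ℝ) • z) = 0 := by rw [h, smul_zero]
    rwa [smul_smul, mul_one_div_cancel two_ne_zero, one_smul] at this
  · rintro rfl
    rw [smul_zero]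

theorem d2_neg' (ψ : V → V → C) (X Y Z : V) :
    M.d2 (fun a b => -ψ a b) X Y Z = -M.d2 ψ X Y Z := by
  simp only [d2, D_neg]
  ring

theorem omegaJ_I (X Y : V) : M.omega M.J (M.I X) (M.I Y) = -M.omega M.J X Y := by
  have h : M.J (M.I Y) = -M.I (M.J Y) := by rw [M.anticomm, neg_neg]
  rw [omega, omega, h, g_neg_right, M.I_metric]

theorem omegaK_I (X Y : V) : M.omega M.K (M.I X) (M.I Y) = -M.omega M.K X Y := by
  have h : M.K (M.I Y) = -M.I (M.K Y) := by
    rw [(quat (M := M) Y).2.2.1, (quat (M := M) Y).2.2.2, neg_neg]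
  rw [omega, omega, h, g_neg_right, M.I_metric]

theorem d2_omega_neg {A : V → V} (h : M.AC A) (X Y Z : V) :
    M.d2 (M.omega A) (-X) (-Y) (-Z) = -M.d2 (M.omega A) X Y Z := by
  have a1 : ∀ X Y Z, M.cov M.nab A (-X) Y Z = -M.cov M.nab A X Y Z := fun X Y Z =>
    neg_of_lin (F := fun X => M.cov M.nab A X Y Z) (fun f X X' => cov_lin1 h f X X' Y Z) X
  have a2 : ∀ X Y Z, M.cov M.nab A X (-Y) Z = -M.cov M.nab A X Y Z := fun X Y Z =>
    neg_of_lin (F := fun Y => M.cov M.nab A X Y Z) (fun f Y Y' => cov_lin2 f X Y Y' Z) Y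
  have a3 : ∀ X Y Z, M.cov M.nab A X Y (-Z) = -M.cov M.nab A X Y Z := fun X Y Z =>
    neg_of_lin (F := fun Z => M.cov M.nab A X Y Z) (fun f Z Z' => cov_lin3 h f X Y Z Z') Z
  rw [d2_omega h, d2_omega h]
  simp only [a1, a2, a3]
  ring

theorem cond_iff : act3 M.J (M.d2 (M.omega M.J)) = act3 M.K (M.d2 (M.omega M.K)) ↔
    ∀ X Y Z, M.d2 (M.omega M.J) X Y Z = M.d2 (M.omega M.K) (M.I X) (M.I Y) (M.I Z) ∧
      M.d2 (M.omega M.K) X Y Z = -M.d2 (M.omega M.J) (M.I X) (M.I Y) (M.I Z) := by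
  have nJ := d2_omega_neg M M.acJ
  have nK := d2_omega_neg M M.acK
  constructor
  · intro h X Y Z
    have h1 := congrFun (congrFun (congrFun h (M.J X)) (M.J Y)) (M.J Z)
    have h2 := congrFun (congrFun (congrFun h (M.K X)) (M.K Y)) (M.K Z)
    simp only [act3, M.J_sq, M.acK.sq, fun X => (quat (M := M) X).2.1.1,
      fun X => (quat (M := M) X).2.1.2, nJ, nK] at h1 h2
    constructor
    · linear_combination h1
    · linear_combination -h2
  · intro h
    funext X Y Z
    have h1 := (h (M.J X) (M.J Y) (M.J Z)).1
    simp only [fun X => (quat (M := M) X).1.1] at h1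
    simp only [act3, h1]

theorem partial_iff :
    (∀ X Y Z, M.partialC M.I (fun a b => (M.omega M.J a b, M.omega M.K a b)) X Y Z = 0) ↔
    act3 M.J (M.d2 (M.omega M.J)) = act3 M.K (M.d2 (M.omega M.K)) := by
  rw [cond_iff]
  refine forall_congr' fun X => forall_congr' fun Y => forall_congr' fun Z => ?_
  rw [partialC, half_smul_eq_zero]
  simp only [d2C, act3C, act2C, muli, omegaJ_I, omegaK_I, d2_neg', Prod.ext_iff, Prod.fst_add,
    Prod.snd_add, Prod.fst_neg, Prod.snd_neg, Prod.fst_zero, Prod.snd_zero]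
  constructor
  · rintro ⟨h1, h2⟩
    exact ⟨by linear_combination h1, by linear_combination h2⟩
  · rintro ⟨h1, h2⟩
    exact ⟨by linear_combination h1, by linear_combination h2⟩

theorem partialBar_iff :
    (∀ X Y Z, M.partialBarC M.I (fun a b => (M.omega M.J a b, -M.omega M.K a b)) X Y Z = 0) ↔
    act3 M.J (M.d2 (M.omega M.J)) = act3 M.K (M.d2 (M.omega M.K)) := by
  rw [cond_iff]
  refine forall_congr' fun X => forall_congr' fun Y => forall_congr' fun Z => ?_
  rw [partialBarC, half_smul_eq_zero]
  simp only [d2C, act3C, act2C, muli, omegaJ_I, omegaK_I, d2_neg', Prod.ext_iff, Prod.fst_sub,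
    Prod.snd_sub, Prod.fst_neg, Prod.snd_neg, Prod.fst_zero, Prod.snd_zero]
  constructor
  · rintro ⟨h1, h2⟩
    exact ⟨by linear_combination h1, by linear_combination -h2⟩
  · rintro ⟨h1, h2⟩
    exact ⟨by linear_combination h1, by linear_combination -h2⟩

end withT

end proofs

end AQH

open AQH in
/-- For an almost hyperHermitian manifold `(M, I, J, K, g)` the
following are equivalent: (1) `M` is HKT; (2) `J dω_J = K dω_K` and `N_J = 0`;
(3) `∂_I(ω_J + iω_K) = 0` and `N_J = 0`; (4) `∂̄_I(ω_J - iω_K) = 0` and `N_J = 0`. -/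
theorem statement10 {n : ℕ} {C V : Type*} [CommRing C] [Algebra ℝ C] [AddCommGroup V]
    [Module C V] [Module ℝ V] [IsScalarTower ℝ C V] (M : AQH n C V) :
    (M.IsHKT ↔
      (act3 M.J (M.d2 (M.omega M.J)) = act3 M.K (M.d2 (M.omega M.K)) ∧
       ∀ X Y, M.nijV M.J X Y = 0)) ∧
    (M.IsHKT ↔
      ((∀ X Y Z, M.partialC M.I (fun a b => (M.omega M.J a b, M.omega M.K a b)) X Y Z = 0) ∧
       ∀ X Y, M.nijV M.J X Y = 0)) ∧
    (M.IsHKT ↔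
      ((∀ X Y Z, M.partialBarC M.I (fun a b => (M.omega M.J a b, -M.omega M.K a b)) X Y Z = 0) ∧
       ∀ X Y, M.nijV M.J X Y = 0)) := by
  refine ⟨hkt_iff M, ?_, ?_⟩
  · rw [hkt_iff M, partial_iff M]
  · rw [hkt_iff M, partialBar_iff M]
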